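/- arXiv:2510.05262 — 9 statements merged into one kernel-verified Lean document; each statement's English description precedes it below -/
import Mathlib

section
/- For all natural numbers n and t with t + 1 ≤ n, and every real number ε satisfying 0 ≤ ε ≤ (t/n) / (2·e·(4·e + 2)), where e = exp(1), one has 5 · (n choose (t+1)) · ((4·e + 2)·ε)^(t+1) ≤ 5 · 2^(−t). -/
/-!
Put `k = t + 1` and `x = (4e + 2)ε`, so that `0 ≤ x ≤ t / (2en)`. From `C(n, k) ≤ n ^ k / k!`
one gets `C(n, k) x ^ k ≤ (t ^ k / k!) / (2e) ^ k`. Since `t ^ k / k!` is a single term of the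
exponential series at `t`, it is at most `e ^ t ≤ e ^ k`, which leaves
`C(n, k) x ^ k ≤ 2 ^ (-k) ≤ 2 ^ (-t)`.
-/

theorem stmt_0 (n t : ℕ) (ht : t + 1 ≤ n) (ε : ℝ)
    (hε0 : 0 ≤ ε)
    (hε : ε ≤ ((t : ℝ) / (n : ℝ)) / (2 * Real.exp 1 * (4 * Real.exp 1 + 2))) :
    5 * (n.choose (t + 1) : ℝ) * ((4 * Real.exp 1 + 2) * ε) ^ (t + 1) ≤
      5 * (2 : ℝ) ^ (-(t : ℤ)) := by
  have hn : (0 : ℝ) < n := by exact_mod_cast (by omega : 0 < n)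
  have he : 0 < Real.exp 1 := Real.exp_pos 1
  have hexp : Real.exp t ≤ Real.exp 1 ^ (t + 1) := by
    rw [← Real.exp_nat_mul]
    apply Real.exp_le_exp.mpr
    push_cast
    linarith
  generalize Real.exp 1 = e at *
  have hx : (4 * e + 2) * ε ≤ t / (2 * e * n) := by
    calc (4 * e + 2) * ε ≤ (4 * e + 2) * ((t / n) / (2 * e * (4 * e + 2))) := by gcongr
      _ = t / (2 * e * n) := by field_simp
  rw [mul_assoc]
  refine mul_le_mul_of_nonneg_left ?_ (by norm_num)
  calc (n.choose (t + 1) : ℝ) * ((4 * e + 2) * ε) ^ (t + 1)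
      ≤ ((n : ℝ) ^ (t + 1) / (t + 1).factorial) * (t / (2 * e * n)) ^ (t + 1) := by
        gcongr
        exact Nat.choose_le_pow_div _ _
    _ = ((t : ℝ) ^ (t + 1) / (t + 1).factorial) / (2 * e) ^ (t + 1) := by
        rw [div_pow, mul_pow (2 * e)]
        field_simp
    _ ≤ e ^ (t + 1) / (2 * e) ^ (t + 1) := by
        gcongr
        exact (Real.pow_div_factorial_le_exp _ (Nat.cast_nonneg t) _).trans hexp
    _ = ((2 : ℝ) ^ (t + 1))⁻¹ := by
        rw [mul_pow]
        field_simp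
    _ ≤ (2 : ℝ) ^ (-(t : ℤ)) := by
        rw [zpow_neg, zpow_natCast]
        gcongr
        · norm_num
        · omega
end

section
/- Let θ be a real number, let U_θ be the 2×2 complex diagonal matrix with entries exp(iθ) and exp(−iθ), and let M = U_θ ⊗ I₂ be its Kronecker product with the 2×2 identity, a matrix indexed by (Fin 2 × Fin 2). Then 2·|sin θ| is the greatest element (IsGreatest) of the set of real numbers 2·√(1 − ‖⟨ψ, M·ψ⟩‖²), where ψ ranges over vectors ψ : Fin 2 × Fin 2 → ℂ with ∑_i ‖ψ i‖² = 1, M·ψ denotes matrix-vector multiplication, and ⟨ψ, v⟩ = ∑_i conj(ψ i)·(v i). -/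
/-!
Let `p` and `q` be the weights of a unit vector `ψ` on the two eigenspaces of `U_θ ⊗ I₂`, so that
`p + q = 1`. Then `⟨ψ, Mψ⟩ = p exp(iθ) + q exp(-iθ) = cos θ + i (p - q) sin θ`, hence
`1 - ‖⟨ψ, Mψ⟩‖² = (1 - (p - q)²) sin² θ` (`one_sub_norm_sq_overlap`). This is at most `sin² θ`,
with equality when `p = q`, for instance when every coordinate of `ψ` is `1 / 2`.
-/

lemma one_sub_norm_sq_overlap (θ : ℝ) (ψ : Fin 2 × Fin 2 → ℂ) (h : (∑ i, ‖ψ i‖ ^ 2) = 1) :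
    1 - ‖∑ i, (starRingEnd ℂ) (ψ i) *
        ((Matrix.kroneckerMap (· * ·)
          (Matrix.diagonal ![Complex.exp (Complex.I * (θ : ℂ)),
            Complex.exp (-(Complex.I * (θ : ℂ)))])
          (1 : Matrix (Fin 2) (Fin 2) ℂ)).mulVec ψ i)‖ ^ 2 =
      (1 - (‖ψ (0, 0)‖ ^ 2 + ‖ψ (0, 1)‖ ^ 2 - ‖ψ (1, 0)‖ ^ 2 - ‖ψ (1, 1)‖ ^ 2) ^ 2) *
        Real.sin θ ^ 2 := by
  have hexp : Complex.exp (Complex.I * (θ : ℂ)) =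
      (Real.cos θ : ℂ) + (Real.sin θ : ℂ) * Complex.I := by
    rw [mul_comm, Complex.exp_mul_I, Complex.ofReal_cos, Complex.ofReal_sin]
  have hexp_neg : Complex.exp (-(Complex.I * (θ : ℂ))) =
      (Real.cos θ : ℂ) - (Real.sin θ : ℂ) * Complex.I := by
    rw [mul_comm, ← neg_mul, Complex.exp_mul_I, Complex.cos_neg, Complex.sin_neg,
      Complex.ofReal_cos, Complex.ofReal_sin]
    ring
  simp only [Fintype.sum_prod_type, Fin.sum_univ_two] at h
  have key : (∑ i, (starRingEnd ℂ) (ψ i) *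
        ((Matrix.kroneckerMap (· * ·)
          (Matrix.diagonal ![Complex.exp (Complex.I * (θ : ℂ)),
            Complex.exp (-(Complex.I * (θ : ℂ)))])
          (1 : Matrix (Fin 2) (Fin 2) ℂ)).mulVec ψ i)) =
      (Real.cos θ : ℂ) + (((‖ψ (0, 0)‖ ^ 2 + ‖ψ (0, 1)‖ ^ 2 - ‖ψ (1, 0)‖ ^ 2
        - ‖ψ (1, 1)‖ ^ 2) * Real.sin θ : ℝ) : ℂ) * Complex.I := by
    have hc := congrArg (fun x : ℝ => (x : ℂ)) h
    have hn := fun i => Complex.conj_mul' (ψ i)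
    simp only [Matrix.mulVec, dotProduct, Fintype.sum_prod_type, Fin.sum_univ_two,
      Matrix.kroneckerMap_apply, hexp, hexp_neg]
    simp [-Complex.ofReal_cos, -Complex.ofReal_sin]
    push_cast [-Complex.ofReal_cos, -Complex.ofReal_sin] at hc
    simp only [← hn] at hc ⊢
    linear_combination (Real.cos θ : ℂ) * hc
  rw [key, ← Complex.normSq_eq_norm_sq, Complex.normSq_add_mul_I]
  linear_combination -Real.sin_sq_add_cos_sq θ

open Matrix in
theorem stmt_4 (θ : ℝ) :
    IsGreatest
      {x : ℝ | ∃ ψ : Fin 2 × Fin 2 → ℂ,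
        (∑ i, ‖ψ i‖ ^ 2) = 1 ∧
        x = 2 * Real.sqrt (1 -
          ‖∑ i, (starRingEnd ℂ) (ψ i) *
            ((Matrix.kroneckerMap (· * ·)
              (Matrix.diagonal ![Complex.exp (Complex.I * (θ : ℂ)),
                Complex.exp (-(Complex.I * (θ : ℂ)))])
              (1 : Matrix (Fin 2) (Fin 2) ℂ)).mulVec ψ i)‖ ^ 2)}
      (2 * |Real.sin θ|) := by
  constructor
  · have h : (∑ i : Fin 2 × Fin 2, ‖(fun _ => 1 / 2 : Fin 2 × Fin 2 → ℂ) i‖ ^ 2) = 1 := by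
      norm_num [Fintype.sum_prod_type]
    refine ⟨fun _ => 1 / 2, h, ?_⟩
    rw [one_sub_norm_sq_overlap θ _ h]
    simp [Real.sqrt_sq_eq_abs]
  · rintro x ⟨ψ, h, rfl⟩
    rw [one_sub_norm_sq_overlap θ ψ h, ← Real.sqrt_sq_eq_abs]
    gcongr
    exact mul_le_of_le_one_left (sq_nonneg _) (sub_le_self _ (sq_nonneg _))
end

section
/- Let L and S be nonempty finite types, let q and q̃ be probability distributions on L × S whose S-marginals q_S and q̃_S are strictly positive, let f : S → L, and let δ ≥ 0 satisfy TVD(q, q̃) ≤ δ. Then ∑_{s ∈ S} q_S(s) · | q(f s, s)/q_S(s) − q̃(f s, s)/q̃_S(s) | ≤ 4δ. -/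
/-!
For fixed `s` write `a = q (f s, s)`, `b = qt (f s, s)` and `A`, `B` for the two marginals at `s`.
Then `A * (a / A - b / B) = (a - b) + (b / B) * (B - A)`, and `0 ≤ b / B ≤ 1`, so the `s`-th term
is at most `|a - b| + |A - B|`. Each of these is at most `∑ l, |q (l, s) - qt (l, s)|`, so summing
over `s` gives at most `2 * ∑ x, |q x - qt x| ≤ 4 * δ`.
-/

theorem marginal_mul_abs_div_sub_div_le {A B a b : ℝ} (hA : 0 < A) (hB : 0 < B) (hb : 0 ≤ b)
    (hbB : b ≤ B) : A * |a / A - b / B| ≤ |a - b| + |A - B| := by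
  have key : A * (a / A - b / B) = (a - b) + b / B * (B - A) := by
    field_simp
    ring
  have h0 : 0 ≤ b / B := div_nonneg hb hB.le
  have h1 : b / B ≤ 1 := (div_le_one hB).2 hbB
  calc A * |a / A - b / B| = |(a - b) + b / B * (B - A)| := by
        rw [← key, abs_mul, abs_of_pos hA]
    _ ≤ |a - b| + |b / B * (B - A)| := abs_add_le _ _
    _ ≤ |a - b| + |A - B| := by
        rw [abs_mul, abs_of_nonneg h0, abs_sub_comm B A]
        gcongr
        exact mul_le_of_le_one_left (abs_nonneg _) h1

theorem stmt_6 {L S : Type*} [Fintype L] [Fintype S] [Nonempty L] [Nonempty S]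
    (q qt : L × S → ℝ)
    (hq0 : ∀ x, 0 ≤ q x) (hq1 : ∑ x, q x = 1)
    (hqt0 : ∀ x, 0 ≤ qt x) (hqt1 : ∑ x, qt x = 1)
    (hqS : ∀ s : S, 0 < ∑ l, q (l, s)) (hqtS : ∀ s : S, 0 < ∑ l, qt (l, s))
    (f : S → L) (δ : ℝ) (hδ : 0 ≤ δ)
    (htvd : (1 / 2) * ∑ x, |q x - qt x| ≤ δ) :
    ∑ s, (∑ l, q (l, s)) *
        |q (f s, s) / (∑ l, q (l, s)) - qt (f s, s) / (∑ l, qt (l, s))| ≤ 4 * δ := by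
  have hterm : ∀ s, (∑ l, q (l, s)) *
      |q (f s, s) / (∑ l, q (l, s)) - qt (f s, s) / (∑ l, qt (l, s))|
        ≤ 2 * ∑ l, |q (l, s) - qt (l, s)| := by
    intro s
    have hbB : qt (f s, s) ≤ ∑ l, qt (l, s) :=
      Finset.single_le_sum (f := fun l => qt (l, s)) (fun l _ => hqt0 _) (Finset.mem_univ (f s))
    have hpt : |q (f s, s) - qt (f s, s)| ≤ ∑ l, |q (l, s) - qt (l, s)| :=
      Finset.single_le_sum (f := fun l => |q (l, s) - qt (l, s)|) (fun l _ => abs_nonneg _)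
        (Finset.mem_univ (f s))
    have hmarg : |∑ l, q (l, s) - ∑ l, qt (l, s)| ≤ ∑ l, |q (l, s) - qt (l, s)| := by
      rw [← Finset.sum_sub_distrib]
      exact Finset.abs_sum_le_sum_abs _ _
    have := marginal_mul_abs_div_sub_div_le (a := q (f s, s)) (hqS s) (hqtS s) (hqt0 (f s, s)) hbB
    linarith
  have hsum := Finset.sum_le_sum fun s (_ : s ∈ Finset.univ) => hterm s
  rw [← Finset.mul_sum, ← Fintype.sum_prod_type_right (fun x => |q x - qt x|)] at hsum
  linarith
end

section
/- Let L and S be nonempty finite types, let q and q̃ be probability distributions on L × S whose S-marginals q_S and q̃_S are strictly positive, let f : S → L, and let δ ≥ 0 satisfy TVD(q, q̃) ≤ δ. Assume q̃ has exact conditional peaks along f, i.e. q̃(f s, s) = q̃_S(s) for every s ∈ S. Then for every real a > 0, the q_S-probability of the set of syndromes with a deficient peak is small: ∑_{s ∈ S, q(f s, s) ≤ (1 − a)·q_S(s)} q_S(s) ≤ 4δ/a. -/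
/-!
The mass `q` puts off the peak in column `s` is `∑ l, q (l, s) - q (f s, s)`. Since `qt` has no mass
off the peak, this is at most the column `ℓ¹` distance `∑ l, |q (l, s) - qt (l, s)|`
(`offPeak_le`). On a deficient column the off-peak mass is at least `a` times the marginal, so
summing over the deficient columns (Markov's inequality) bounds `a` times their probability by the
full `ℓ¹` distance, which is at most `2 * δ`. The constant `4` is therefore not sharp.
-/

lemma offPeak_le {L : Type*} [Fintype L] (u v : L → ℝ) (m : L) (hv : v m = ∑ l, v l) :
    ∑ l, u l - u m ≤ ∑ l, |u l - v l| := by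
  classical
  have hu := Finset.add_sum_erase Finset.univ u (Finset.mem_univ m)
  have hv' := Finset.add_sum_erase Finset.univ v (Finset.mem_univ m)
  have h1 : ∑ l ∈ Finset.univ.erase m, (u l - v l) ≤ ∑ l ∈ Finset.univ.erase m, |u l - v l| :=
    Finset.sum_le_sum fun l _ => le_abs_self _
  have h2 : ∑ l ∈ Finset.univ.erase m, |u l - v l| ≤ ∑ l, |u l - v l| :=
    Finset.sum_le_sum_of_subset_of_nonneg (Finset.erase_subset _ _) fun _ _ _ => abs_nonneg _
  rw [Finset.sum_sub_distrib] at h1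
  linarith

theorem stmt_7 {L S : Type*} [Fintype L] [Fintype S] [Nonempty L] [Nonempty S]
    (q qt : L × S → ℝ)
    (hq0 : ∀ x, 0 ≤ q x) (hq1 : ∑ x, q x = 1)
    (hqt0 : ∀ x, 0 ≤ qt x) (hqt1 : ∑ x, qt x = 1)
    (hqS : ∀ s : S, 0 < ∑ l, q (l, s)) (hqtS : ∀ s : S, 0 < ∑ l, qt (l, s))
    (f : S → L) (δ : ℝ) (hδ : 0 ≤ δ)
    (htvd : (1 / 2) * ∑ x, |q x - qt x| ≤ δ)
    (hpeak : ∀ s : S, qt (f s, s) = ∑ l, qt (l, s))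
    (a : ℝ) (ha : 0 < a) :
    ∑ s ∈ Finset.univ.filter (fun s : S => q (f s, s) ≤ (1 - a) * ∑ l, q (l, s)),
      (∑ l, q (l, s)) ≤ 4 * δ / a := by
  rw [le_div_iff₀ ha, Finset.sum_mul]
  have hcol : ∑ s : S, ∑ l, |q (l, s) - qt (l, s)| = ∑ x, |q x - qt x| :=
    (Fintype.sum_prod_type_right (fun x : L × S => |q x - qt x|)).symm
  calc _ ≤ ∑ s ∈ Finset.univ.filter
          (fun s : S => q (f s, s) ≤ (1 - a) * ∑ l, q (l, s)),
          ∑ l, |q (l, s) - qt (l, s)| := by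
        refine Finset.sum_le_sum fun s hs => ?_
        have hdef := (Finset.mem_filter.mp hs).2
        have hoff := offPeak_le (fun l => q (l, s)) (fun l => qt (l, s)) (f s) (hpeak s)
        linarith
    _ ≤ ∑ s : S, ∑ l, |q (l, s) - qt (l, s)| :=
        Finset.sum_le_sum_of_subset_of_nonneg (Finset.filter_subset _ _)
          fun _ _ _ => Finset.sum_nonneg fun _ _ => abs_nonneg _
    _ ≤ 4 * δ := by linarith
end

section
/- Let L and S be nonempty finite types, let q be a probability distribution on L × S with S-marginal q_S, let f : S → L, and let η ∈ [0,1] satisfy q(f s, s) ≥ (1 − η)·q_S(s) for every s ∈ S. Let r be a probability distribution on S with TVD(q_S, r) ≤ δ, and define q̂ on L × S by q̂(l, s) = r(s) if l = f s and q̂(l, s) = 0 otherwise. Then q̂ is a probability distribution on L × S and TVD(q, q̂) ≤ δ + η. -/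
/-!
The bound is proved fibrewise over `s : S`. Writing `m = ∑ l, q (l, s)`, the decoded distribution
differs from `q` on the fibre by `|q (f s, s) - r s|` at the decoded point and by the undecoded
mass `m - q (f s, s) ≤ η * m` elsewhere. The triangle inequality through `m` bounds the total by
`|m - r s| + 2 * η * m` (`fibre_bound`); summing over `s` and halving gives `δ + η`.
-/

/-- The `ℓ¹` distance on one fibre between a peaked weight `p` and a point mass `t` at `a`. -/
lemma fibre_bound {L : Type*} [Fintype L] [DecidableEq L] (p : L → ℝ) (hp : ∀ l, 0 ≤ p l)
    (a : L) (t η : ℝ) (hpeak : (1 - η) * ∑ l, p l ≤ p a) :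
    ∑ l, |p l - (if l = a then t else 0)| ≤ |(∑ l, p l) - t| + 2 * (η * ∑ l, p l) := by
  have hsplit := Finset.add_sum_erase Finset.univ p (Finset.mem_univ a)
  have hrest : ∑ l ∈ Finset.univ.erase a, |p l - (if l = a then t else 0)|
      = ∑ l ∈ Finset.univ.erase a, p l := by
    refine Finset.sum_congr rfl fun l hl => ?_
    rw [if_neg (Finset.ne_of_mem_erase hl), sub_zero, abs_of_nonneg (hp l)]
  have hnonneg : 0 ≤ ∑ l ∈ Finset.univ.erase a, p l := Finset.sum_nonneg fun l _ => hp l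
  rw [← Finset.add_sum_erase Finset.univ _ (Finset.mem_univ a), hrest, if_pos rfl]
  have htri := abs_sub_le (p a) (∑ l, p l) t
  have habs : |p a - ∑ l, p l| = (∑ l, p l) - p a := by
    rw [abs_sub_comm, abs_of_nonneg (by linarith)]
  linarith

theorem stmt_8 {L S : Type*} [Fintype L] [Fintype S] [Nonempty L] [Nonempty S]
    [DecidableEq L]
    (q : L × S → ℝ)
    (hq0 : ∀ x, 0 ≤ q x) (hq1 : ∑ x, q x = 1)
    (f : S → L) (η : ℝ) (hη : η ∈ Set.Icc (0 : ℝ) 1)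
    (hpeak : ∀ s : S, (1 - η) * (∑ l, q (l, s)) ≤ q (f s, s))
    (r : S → ℝ) (hr0 : ∀ s, 0 ≤ r s) (hr1 : ∑ s, r s = 1)
    (δ : ℝ)
    (htvd : (1 / 2) * ∑ s, |(∑ l, q (l, s)) - r s| ≤ δ) :
    (∀ x : L × S, 0 ≤ (if x.1 = f x.2 then r x.2 else 0)) ∧
    (∑ x : L × S, (if x.1 = f x.2 then r x.2 else 0)) = 1 ∧
    (1 / 2) * ∑ x : L × S, |q x - (if x.1 = f x.2 then r x.2 else 0)| ≤ δ + η := by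
  refine ⟨fun x => ?_, ?_, ?_⟩
  · split_ifs
    exacts [hr0 _, le_rfl]
  · rw [Fintype.sum_prod_type_right]
    simpa using hr1
  · rw [Fintype.sum_prod_type_right] at hq1 ⊢
    have hsum := Finset.sum_le_sum fun s (_ : s ∈ Finset.univ) =>
      fibre_bound (fun l => q (l, s)) (fun l => hq0 _) (f s) (r s) η (hpeak s)
    rw [Finset.sum_add_distrib, ← Finset.mul_sum, ← Finset.mul_sum, hq1] at hsum
    linarith
end

section
/- Let L and S be nonempty finite types, let q be a probability distribution on L × S with S-marginal q_S, let f : S → L, and let η ∈ [0,1] satisfy q(f s, s) ≥ (1 − η)·q_S(s) for every s ∈ S. Then the collision probability satisfies ∑_{(l,s) ∈ L × S} q(l,s)² ≥ (1 − η)² / |S|, where |S| is the cardinality of S. -/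
/-! Summing the peak hypothesis over syndromes shows that the peaks `q (f s, s)` have total mass at
least `1 - η`. By Cauchy–Schwarz over `S`, their squares sum to at least `(1 - η) ^ 2 / |S|`, and
the peaks are only some of the terms of the collision probability. -/

theorem stmt_9 {L S : Type*} [Fintype L] [Fintype S] [Nonempty L] [Nonempty S]
    (q : L × S → ℝ)
    (hq0 : ∀ x, 0 ≤ q x) (hq1 : ∑ x, q x = 1)
    (f : S → L) (η : ℝ) (hη : η ∈ Set.Icc (0 : ℝ) 1)
    (hpeak : ∀ s : S, (1 - η) * (∑ l, q (l, s)) ≤ q (f s, s)) :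
    (1 - η) ^ 2 / (Fintype.card S : ℝ) ≤ ∑ x : L × S, q x ^ 2 := by
  rw [Fintype.sum_prod_type_right] at hq1 ⊢
  have hmass : 1 - η ≤ ∑ s, q (f s, s) := by
    calc 1 - η = ∑ s, (1 - η) * ∑ l, q (l, s) := by rw [← Finset.mul_sum, hq1, mul_one]
      _ ≤ _ := Finset.sum_le_sum fun s _ => hpeak s
  have hcs : (∑ s, q (f s, s)) ^ 2 ≤ (Fintype.card S : ℝ) * ∑ s, q (f s, s) ^ 2 :=
    sq_sum_le_card_mul_sum_sq
  have hpeaks : ∑ s, q (f s, s) ^ 2 ≤ ∑ s, ∑ l, q (l, s) ^ 2 :=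
    Finset.sum_le_sum fun s _ =>
      Finset.single_le_sum (f := fun l => q (l, s) ^ 2) (fun l _ => sq_nonneg _)
        (Finset.mem_univ (f s))
  have hcard : (0 : ℝ) < Fintype.card S := by exact_mod_cast Fintype.card_pos
  rw [div_le_iff₀' hcard]
  calc (1 - η) ^ 2 ≤ (∑ s, q (f s, s)) ^ 2 :=
        pow_le_pow_left₀ (sub_nonneg.2 hη.2) hmass 2
    _ ≤ _ := hcs
    _ ≤ _ := mul_le_mul_of_nonneg_left hpeaks hcard.le
end

section
/- Let C be a binary linear code of length n and dimension k over 𝔽₂, and let θ be a real number with cos(θ/2) ≠ 0. Then ∑_{d ∈ C^⊥} exp(i·θ·wt(d)) = 2^{n−k} · exp(i·θ·n/2) · cos(θ/2)^n · ∑_{c ∈ C} (−i·tan(θ/2))^{wt(c)}, as an identity of complex numbers. -/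
/-!
This is the MacWilliams identity at `z = exp (iθ)`. Let `χ` be the nontrivial character of `𝔽₂` and
evaluate `∑ c ∈ C, ∑ d, χ (c ⬝ d) z ^ wt d` in two ways. Summing over `c` first, character
orthogonality (`sum_signChar_code`) leaves `2 ^ k` times the sum over the dual code. Summing over
`d` first, the sum factors over coordinates (`sum_signChar_mul_pow`) into factors `1 + z` where
`c i = 0` and `1 - z` elsewhere. Since `1 + z = 2 cos (θ/2) exp (iθ/2)` and
`1 - z = (1 + z) * (-i tan (θ/2))`, this is the right-hand side up to powers of two.
-/

/-- The nontrivial additive character of `𝔽₂`, with values `1` at `0` and `-1` at `1`. -/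
noncomputable def signChar (a : ZMod 2) : ℂ := if a = 0 then 1 else -1

lemma signChar_add (a b : ZMod 2) : signChar (a + b) = signChar a * signChar b := by
  have h : (1 + 1 : ZMod 2) = 0 := by decide
  have h01 (x : ZMod 2) : x = 0 ∨ x = 1 := by revert x; decide
  rcases h01 a with rfl | rfl <;> rcases h01 b with rfl | rfl <;> simp [signChar, h]

lemma signChar_sum {ι : Type*} (s : Finset ι) (f : ι → ZMod 2) :
    signChar (∑ i ∈ s, f i) = ∏ i ∈ s, signChar (f i) := by
  classical
  induction s using Finset.induction_on with
  | empty => simp [signChar]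
  | insert a s ha ih => rw [Finset.sum_insert ha, Finset.prod_insert ha, signChar_add, ih]

lemma pow_hammingNorm {n : ℕ} (z : ℂ) (d : Fin n → ZMod 2) :
    z ^ hammingNorm d = ∏ i, if d i = 0 then 1 else z := by
  simp [hammingNorm, Finset.prod_ite]

open Classical in
/-- Character orthogonality on `C`. If `c₀ ∈ C` is not orthogonal to `d`, translation by `c₀`
negates the sum, which therefore vanishes. -/
lemma sum_signChar_code {n : ℕ} (C : Submodule (ZMod 2) (Fin n → ZMod 2)) (d : Fin n → ZMod 2) :
    ∑ c : C, signChar (∑ i, (c : Fin n → ZMod 2) i * d i) =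
      if ∀ c ∈ C, ∑ i, c i * d i = 0 then (2 : ℂ) ^ Module.finrank (ZMod 2) C else 0 := by
  split_ifs with h
  · rw [Finset.sum_congr rfl (fun c _ => by rw [h c c.2])]
    have hc := Module.card_eq_pow_finrank (K := ZMod 2) (V := C)
    rw [ZMod.card] at hc
    simp [signChar, hc]
  · push Not at h
    obtain ⟨c₀, hc₀, h0⟩ := h
    have key := Equiv.sum_comp (Equiv.addRight (⟨c₀, hc₀⟩ : C))
      (fun c : C => signChar (∑ i, (c : Fin n → ZMod 2) i * d i))
    have hneg : signChar (∑ i, c₀ i * d i) = -1 := by simp [signChar, h0]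
    simp only [Equiv.coe_addRight, Submodule.coe_add, Pi.add_apply, add_mul,
      Finset.sum_add_distrib, signChar_add, hneg, mul_neg, mul_one, Finset.sum_neg_distrib] at key
    linear_combination (-1 / 2 : ℂ) * key

/-- The Fourier transform of `d ↦ z ^ wt d` factors over the coordinates. -/
lemma sum_signChar_mul_pow {n : ℕ} (z : ℂ) (c : Fin n → ZMod 2) :
    ∑ d : Fin n → ZMod 2, signChar (∑ i, c i * d i) * z ^ hammingNorm d =
      ∏ i, if c i = 0 then 1 + z else 1 - z := by
  have h := Finset.prod_univ_sum (fun _ : Fin n => (Finset.univ : Finset (ZMod 2)))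
    (fun i a => signChar (c i * a) * if a = 0 then 1 else z)
  rw [Fintype.piFinset_univ] at h
  simp only [signChar_sum, pow_hammingNorm, ← Finset.prod_mul_distrib]
  rw [← h]
  refine Finset.prod_congr rfl fun i _ => ?_
  have hu : (Finset.univ : Finset (ZMod 2)) = {0, 1} := by decide
  rw [hu, Finset.sum_pair (by decide)]
  by_cases hi : c i = 0 <;> simp [signChar, hi, sub_eq_add_neg]

open Classical in
/-- Evaluation of the dual weight enumerator at `e^{iθ}`:
`W_{C^⊥}(e^{iθ}) = 2^{n−k} e^{iθn/2} cos(θ/2)^n W_C(−i tan(θ/2))`. -/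
theorem stmt_12 (n k : ℕ) (C : Submodule (ZMod 2) (Fin n → ZMod 2))
    (hk : Module.finrank (ZMod 2) C = k) (θ : ℝ) (hθ : Real.cos (θ / 2) ≠ 0) :
    (∑ d ∈ Finset.univ.filter
        (fun d : Fin n → ZMod 2 => ∀ c ∈ C, ∑ i, c i * d i = 0),
      Complex.exp (Complex.I * (θ : ℂ) * (hammingNorm d : ℂ)))
    = 2 ^ (n - k) * Complex.exp (Complex.I * (θ : ℂ) * (n : ℂ) / 2) *
        ((Real.cos (θ / 2) : ℂ)) ^ n *
        ∑ c ∈ Finset.univ.filter (fun c : Fin n → ZMod 2 => c ∈ C),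
          (-Complex.I * (Real.tan (θ / 2) : ℂ)) ^ hammingNorm c := by
  have hkn : k ≤ n := by
    have := Submodule.finrank_le C
    rw [hk, Module.finrank_fin_fun] at this
    exact this
  set z := Complex.exp (Complex.I * θ) with hz
  set w := Complex.exp (Complex.I * θ / 2) with hw
  set t := -Complex.I * (Real.tan (θ / 2) : ℂ) with ht
  have hcs : w = Real.cos (θ / 2) + Real.sin (θ / 2) * Complex.I := by
    rw [hw, Complex.ofReal_cos, Complex.ofReal_sin, ← Complex.exp_mul_I]
    congr 1; push_cast; ring
  have hzw : z = w * w := by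
    rw [hz, hw, ← Complex.exp_add]; congr 1; ring
  have hsq : (Real.cos (θ / 2) : ℂ) ^ 2 + (Real.sin (θ / 2) : ℂ) ^ 2 = 1 := by
    exact_mod_cast Real.cos_sq_add_sin_sq (θ / 2)
  have hplus : 1 + z = 2 * w * Real.cos (θ / 2) := by
    rw [hzw, hcs]
    linear_combination (-1 : ℂ) * hsq + (Real.sin (θ / 2) : ℂ) ^ 2 * Complex.I_sq
  have htan : (Real.cos (θ / 2) : ℂ) * Real.tan (θ / 2) = Real.sin (θ / 2) := by
    rw [mul_comm]; exact_mod_cast Real.tan_mul_cos hθ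
  have hminus : 1 - z = (1 + z) * t := by
    rw [hplus, ht]
    have : 2 * w * Real.cos (θ / 2) * (-Complex.I * (Real.tan (θ / 2) : ℂ)) =
        -2 * w * Complex.I * Real.sin (θ / 2) := by
      linear_combination (-2 * w * Complex.I) * htan
    rw [this, hzw, hcs]
    linear_combination (-1 : ℂ) * hsq + (Real.sin (θ / 2) : ℂ) ^ 2 * Complex.I_sq
  have hexp (d : Fin n → ZMod 2) :
      Complex.exp (Complex.I * (θ : ℂ) * (hammingNorm d : ℂ)) = z ^ hammingNorm d := by
    rw [hz, ← Complex.exp_nat_mul, mul_comm]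
  have hwn : Complex.exp (Complex.I * (θ : ℂ) * (n : ℂ) / 2) = w ^ n := by
    rw [hw, ← Complex.exp_nat_mul]; congr 1; ring
  have hfactor (c : Fin n → ZMod 2) :
      (∏ i, if c i = 0 then 1 + z else 1 - z) = (1 + z) ^ n * t ^ hammingNorm c := by
    have hconst : (1 + z) ^ n = ∏ _i : Fin n, (1 + z) := by simp
    rw [pow_hammingNorm, hconst, ← Finset.prod_mul_distrib]
    refine Finset.prod_congr rfl fun i _ => ?_
    split_ifs
    · ring
    · exact hminus
  -- The double sum over `C × 𝔽₂ⁿ`, evaluated in both orders.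
  have hdouble : (2 : ℂ) ^ k * ∑ d ∈ Finset.univ.filter
        (fun d : Fin n → ZMod 2 => ∀ c ∈ C, ∑ i, c i * d i = 0), z ^ hammingNorm d =
      (1 + z) ^ n * ∑ c : C, t ^ hammingNorm (c : Fin n → ZMod 2) := by
    simp only [Finset.mul_sum, ← hfactor, ← sum_signChar_mul_pow]
    rw [Finset.sum_comm, Finset.sum_filter]
    refine Finset.sum_congr rfl fun d _ => ?_
    rw [← Finset.sum_mul, sum_signChar_code, hk, ite_mul, zero_mul]
  have hsub : ∑ c ∈ Finset.univ.filter (fun c : Fin n → ZMod 2 => c ∈ C), t ^ hammingNorm c =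
      ∑ c : C, t ^ hammingNorm (c : Fin n → ZMod 2) :=
    Finset.sum_subtype _ (by simp) _
  simp only [hexp, hwn]
  rw [hsub]
  apply mul_left_cancel₀ (pow_ne_zero k (two_ne_zero : (2 : ℂ) ≠ 0))
  rw [hdouble, hplus, mul_pow, mul_pow, ← pow_mul_pow_sub (2 : ℂ) hkn]
  ring
end

section
/- Let V be a module over ℂ, let g : Fin r → Module.End ℂ V be pairwise commuting endomorphisms with (g i)² = 1 for every i, and for s : Fin r → Bool let Π_s be the product over i of (1/2)·(1 + (−1)^{s i}·g i). Let P = Π_{s₀} where s₀ is the constant-false string (the projector onto the joint +1 eigenspace of all g i). Let E : Module.End ℂ V and r_E : Fin r → Bool satisfy the commutation relations g i ∘ E = (−1)^{r_E i} · (E ∘ g i) for every i. Then for every s : Fin r → Bool, Π_s ∘ E ∘ P = (if s = r_E then (1:ℂ) else 0) • (E ∘ P). -/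
/-! Every generator fixes `P`: the factor `(1 + g j)/2` of `P` absorbs `g j`, which commutes with
the other factors. Hence `g i * (E * P) = (-1)^{rE i} • (E * P)`, so `E * P` is a simultaneous
eigenvector for left multiplication by the `g i`, and the `i`-th factor of `Π_s` scales it by
`1` if `s i = rE i` and by `0` otherwise. The product of these scalars is `δ_{s, rE}`. -/

/-- The syndrome projector `Π_s = ∏_i (1 + (−1)^{s i} g i)/2`, as an ordered product
(well defined in any order when the `g i` pairwise commute). -/
noncomputable def synProj {V : Type*} [AddCommGroup V] [Module ℂ V] {r : ℕ}
    (g : Fin r → Module.End ℂ V) (s : Fin r → Bool) : Module.End ℂ V :=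
  (List.ofFn (fun i : Fin r => (1 / 2 : ℂ) • (1 + (if s i then (-1 : ℂ) else 1) • g i))).prod

/-- An element commuting with every factor of a product and absorbed by one of them is absorbed
by the product. -/
lemma mul_list_prod_of_absorb {M : Type*} [Monoid M] (a f : M) (hf : a * f = f) (L : List M)
    (hL : ∀ x ∈ L, Commute a x) (hmem : f ∈ L) : a * L.prod = L.prod := by
  induction L with
  | nil => simp at hmem
  | cons x L ih =>
    rw [List.prod_cons]
    rcases List.mem_cons.1 hmem with rfl | h
    · rw [← mul_assoc, hf]
    · rw [← mul_assoc, (hL x (by simp)).eq, mul_assoc,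
        ih (fun y hy => hL y (List.mem_cons_of_mem _ hy)) h]

lemma ofFn_prod_mul_of_eigen {A : Type*} [Ring A] [Algebra ℂ A] (X : A) {r : ℕ}
    (f : Fin r → A) (c : Fin r → ℂ) (h : ∀ i, f i * X = c i • X) :
    (List.ofFn f).prod * X = (∏ i, c i) • X := by
  induction r with
  | zero => simp
  | succ n ih =>
    rw [List.ofFn_succ, List.prod_cons, mul_assoc, ih _ (fun i => c i.succ) (fun i => h i.succ),
      mul_smul_comm, h 0, smul_smul, Fin.prod_univ_succ, mul_comm]

lemma gen_mul_synProj {V : Type*} [AddCommGroup V] [Module ℂ V] {r : ℕ}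
    (g : Fin r → Module.End ℂ V)
    (hcomm : ∀ i j, Commute (g i) (g j)) (hsq : ∀ i, (g i) ^ 2 = 1) (j : Fin r) :
    g j * synProj g (fun _ => false) = synProj g (fun _ => false) := by
  refine mul_list_prod_of_absorb (g j) ((1 / 2 : ℂ) • (1 + g j)) ?_ _ ?_ ?_
  · rw [mul_smul_comm, mul_add, mul_one, ← pow_two, hsq, add_comm]
  · intro x hx
    obtain ⟨i, rfl⟩ := (List.mem_ofFn' _ _).1 hx
    exact ((Commute.one_right _).add_right ((hcomm j i).smul_right _)).smul_right _
  · exact (List.mem_ofFn' _ _).2 ⟨j, by simp⟩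

theorem stmt_14 {V : Type*} [AddCommGroup V] [Module ℂ V] {r : ℕ}
    (g : Fin r → Module.End ℂ V)
    (hcomm : ∀ i j, Commute (g i) (g j))
    (hsq : ∀ i, (g i) ^ 2 = 1)
    (E : Module.End ℂ V) (rE : Fin r → Bool)
    (hsyn : ∀ i, g i * E = (if rE i then (-1 : ℂ) else 1) • (E * g i)) :
    ∀ s : Fin r → Bool,
      synProj g s * E * synProj g (fun _ => false)
        = (if s = rE then (1 : ℂ) else 0) • (E * synProj g (fun _ => false)) := by
  intro s
  rw [mul_assoc]
  have hEP : ∀ i, g i * (E * synProj g (fun _ => false))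
      = (if rE i then (-1 : ℂ) else 1) • (E * synProj g (fun _ => false)) := by
    intro i
    rw [← mul_assoc, hsyn, smul_mul_assoc, mul_assoc, gen_mul_synProj g hcomm hsq]
  generalize E * synProj g (fun _ => false) = X at hEP ⊢
  have key := ofFn_prod_mul_of_eigen X
    (fun i : Fin r => (1 / 2 : ℂ) • (1 + (if s i then (-1 : ℂ) else 1) • g i))
    (fun i => if s i = rE i then 1 else 0) (fun i => by
      rw [smul_mul_assoc, add_mul, one_mul, smul_mul_assoc, hEP, smul_smul]
      nth_rewrite 1 [← one_smul ℂ X]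
      rw [← add_smul, smul_smul]
      congr 1
      cases s i <;> cases rE i <;> norm_num)
  rw [synProj, key]
  congr 1
  rw [Finset.prod_ite_zero]
  simp [funext_iff]
end

section
/- Let V be a finite-dimensional vector space over ℂ, let σ be a type of syndrome labels, let P : Module.End ℂ V be idempotent (P ∘ P = P), let Π : σ → Module.End ℂ V, let ι be a finite index type, let E : ι → Module.End ℂ V, let χ : ι → ι → ℂ, let λ : ι → ι → ℂ, and let r : ι → σ. Assume: (i) for every a : ι and s : σ, Π_s ∘ (E a) ∘ P = (if s = r a then (1:ℂ) else 0) • ((E a) ∘ P); and (ii) the Knill–Laflamme condition: for all a b : ι, P ∘ (E b) ∘ (E a) ∘ P = (λ b a) • P. Then for every ρ : Module.End ℂ V with ρ = P ∘ ρ ∘ P and trace(ρ) = 1, and for every s : σ, the trace trace( Π_s ∘ ( ∑_{a,b} χ a b • ((E a) ∘ ρ ∘ (E b)) ) ) equals ∑_{a,b} χ a b · (if s = r a then 1 else 0) · λ b a. In particular this value does not depend on ρ. -/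
/-!
Since `P` is idempotent and `ρ = P ρ P`, the projector can be inserted on either side of `ρ`.
Inserted on the left, it lets the syndrome relation replace `Pi s * E a * P` by `δ • (E a * P)`,
where `δ` is the indicator of `s = r a`. Inserted on the right, together with cyclicity of the
trace, it gives `tr (E a P ρ E b) = tr (ρ P E b E a P) = lam b a * tr (ρ P) = lam b a`.
Linearity then sums these terms.
-/

open Classical in
theorem stmt_15 {V : Type*} [AddCommGroup V] [Module ℂ V] [FiniteDimensional ℂ V]
    {σ : Type*} (P : Module.End ℂ V) (hP : P * P = P)
    (Pi : σ → Module.End ℂ V)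
    {ι : Type*} [Fintype ι]
    (E : ι → Module.End ℂ V) (χ : ι → ι → ℂ) (lam : ι → ι → ℂ) (r : ι → σ)
    (hsyn : ∀ (a : ι) (s : σ),
      Pi s * E a * P = (if s = r a then (1 : ℂ) else 0) • (E a * P))
    (hKL : ∀ a b : ι, P * E b * E a * P = lam b a • P) :
    ∀ ρ : Module.End ℂ V, ρ = P * ρ * P → LinearMap.trace ℂ V ρ = 1 →
      ∀ s : σ,
        LinearMap.trace ℂ V (Pi s * ∑ a, ∑ b, χ a b • (E a * ρ * E b))
          = ∑ a, ∑ b, χ a b * (if s = r a then (1 : ℂ) else 0) * lam b a := by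
  intro ρ hρ htr s
  have hl : P * ρ = ρ := by
    rw [hρ, ← mul_assoc, ← mul_assoc, hP]
  have hr : ρ * P = ρ := by
    rw [hρ, mul_assoc, hP]
  -- Cyclicity of the trace turns the Knill–Laflamme operator into the scalar `lam b a`.
  have key : ∀ a b, LinearMap.trace ℂ V (E a * P * (ρ * E b)) = lam b a := by
    intro a b
    have h : ρ * E b * (E a * P) = ρ * (P * E b * E a * P) := by
      conv_lhs => rw [← hr]
      simp only [mul_assoc]
    rw [LinearMap.trace_mul_comm, h, hKL, mul_smul_comm, hr, map_smul, htr, smul_eq_mul, mul_one]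
  simp only [Finset.mul_sum, map_sum]
  refine Finset.sum_congr rfl fun a _ => Finset.sum_congr rfl fun b _ => ?_
  have h : Pi s * (E a * ρ * E b) = Pi s * E a * P * (ρ * E b) := by
    conv_lhs => rw [← hl]
    simp only [mul_assoc]
  rw [mul_smul_comm, h, hsyn, smul_mul_assoc, map_smul, map_smul, key, smul_eq_mul, smul_eq_mul,
    mul_assoc]
end
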